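/- arXiv:2204.03519 — 2 statements merged into one kernel-verified Lean document; each statement's English description precedes it below -/
import Mathlib

section
/- There is an absolute constant K > 0 such that for every real σ ∈ [1/2, 1], every real X ≥ 10, every real Y with X^σ ≤ Y ≤ X, and every natural number k with 1 ≤ k ≤ log X, one has ∑_{n ∈ [X, X+Y], n squarefree} τ_k(n) ≤ K · Y · (log X)^4 · exp(2 · k^{1/σ} · log log X). -/
open Finset

/-- The `k`-fold divisor function `τ_k(n)`: the number of `k`-tuples
`(a_1, …, a_k)` of positive integers with `a_1 ⋯ a_k = n`. -/
def tauk (k n : ℕ) : ℕ :=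
  ((Fintype.piFinset fun _ : Fin k => Finset.Icc 1 n).filter fun f => ∏ i, f i = n).card

open scoped Classical

/-!
On squarefree `n` we have `τ_k(n) = k ^ ω(n)`. The product of the `⌊σ ω(n)⌋` smallest prime factors
of `n` is a divisor `d ≤ n ^ σ` with `σ ω(n) < ω(d) + 1`, so `τ_k(n) ≤ κ ^ (ω(d) + 1)` for
`κ = k ^ (1 / σ)`. Since `d` is at most `2 Y`, the interval contains at most `3 Y / d` multiples of
it; summing over all such `d` gives at most `3 Y κ ∏ (1 + κ / p)` over the primes `p ≤ 2 Y`.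
Chebyshev's bound `θ(x) ≤ x log 4` and partial summation give `∑ 1 / p ≤ log 4 · log log x + O(1)`,
and as `log 4 < 2` the error terms are absorbed for large `X`. For bounded `X` the Euler product is
a polynomial in `κ` of bounded degree.
-/

open scoped ArithmeticFunction.omega

theorem tauk_of_squarefree {n : ℕ} (hn : Squarefree n) (k : ℕ) : tauk k n = k ^ ω n := by
  rw [← Nat.card_finMulAntidiag_of_squarefree hn, tauk]
  congr 1
  ext f
  simp only [mem_filter, Fintype.mem_piFinset, mem_Icc, Nat.mem_finMulAntidiag]
  refine ⟨fun hf => ⟨hf.2, hn.ne_zero⟩, fun hf => ⟨fun i => ?_, hf.1⟩⟩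
  have hfi : f i ∣ n := hf.1 ▸ dvd_prod_of_mem f (mem_univ i)
  exact ⟨Nat.pos_of_dvd_of_pos hfi hn.ne_zero.bot_lt, Nat.le_of_dvd hn.ne_zero.bot_lt hfi⟩

theorem cardDistinctFactors_eq_card_primeFactors (n : ℕ) : ω n = #n.primeFactors := rfl

/-! ### Divisors of small size with many prime factors -/

theorem exists_subset_card_eq_prod_pow_card_le {ι R : Type*} [CommSemiring R] [LinearOrder R]
    [IsOrderedRing R] {s : Finset ι} {f : ι → R} (hf : ∀ i ∈ s, 0 ≤ f i) {m : ℕ} (hm : m ≤ #s) :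
    ∃ t ⊆ s, #t = m ∧ (∏ i ∈ t, f i) ^ #s ≤ (∏ i ∈ s, f i) ^ m := by
  induction s using Finset.induction_on_max_value f generalizing m with
  | empty => exact ⟨∅, subset_rfl, by simp_all⟩
  | insert a s ha hmax ih =>
    have hfs : ∀ i ∈ s, 0 ≤ f i := fun i hi => hf i (mem_insert_of_mem hi)
    rcases hm.eq_or_lt with rfl | hlt
    · exact ⟨insert a s, subset_rfl, rfl, le_rfl⟩
    rw [card_insert_of_notMem ha, Nat.lt_succ_iff] at hlt
    obtain ⟨t, hts, rfl, ht⟩ := ih hfs hlt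
    refine ⟨t, hts.trans (subset_insert a s), rfl, ?_⟩
    have ht_le : ∏ i ∈ t, f i ≤ f a ^ #t :=
      prod_const (f a) (s := t) ▸
        prod_le_prod (fun i hi => hfs i (hts hi)) fun i hi => hmax i (hts hi)
    rw [card_insert_of_notMem ha, prod_insert ha, pow_succ', mul_pow]
    exact mul_le_mul ht_le ht (pow_nonneg (prod_nonneg fun i hi => hfs i (hts hi)) _)
      (pow_nonneg (hf a (mem_insert_self a s)) _)

theorem exists_subset_prod_le_rpow {ι : Type*} {s : Finset ι} {f : ι → ℝ} (hf : ∀ i ∈ s, 1 ≤ f i)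
    {σ : ℝ} (hσ₀ : 0 ≤ σ) (hσ₁ : σ ≤ 1) :
    ∃ t ⊆ s, ∏ i ∈ t, f i ≤ (∏ i ∈ s, f i) ^ σ ∧ σ * #s < #t + 1 := by
  have hfloor : (⌊σ * #s⌋₊ : ℝ) ≤ σ * #s := Nat.floor_le (by positivity)
  have hcard : ⌊σ * #s⌋₊ ≤ #s := Nat.floor_le_of_le (mul_le_of_le_one_left (by positivity) hσ₁)
  have hf₀ : ∀ i ∈ s, 0 ≤ f i := fun i hi => zero_le_one.trans (hf i hi)
  obtain ⟨t, hts, htcard, ht⟩ := exists_subset_card_eq_prod_pow_card_le hf₀ hcard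
  refine ⟨t, hts, ?_, htcard ▸ Nat.lt_floor_add_one _⟩
  rcases s.eq_empty_or_nonempty with rfl | hs
  · simp [subset_empty.mp hts]
  have hprod : 1 ≤ ∏ i ∈ s, f i := one_le_prod hf
  refine le_of_pow_le_pow_left₀ hs.card_ne_zero (by positivity) (ht.trans ?_)
  rw [← Real.rpow_natCast, ← Real.rpow_natCast, ← Real.rpow_mul (by positivity)]
  exact Real.rpow_le_rpow_of_exponent_le hprod hfloor

theorem pow_le_rpow_one_div_pow {x σ : ℝ} (hx : 1 ≤ x) (hσ : 0 < σ) {a b : ℕ} (hab : σ * a ≤ b) :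
    x ^ a ≤ (x ^ (1 / σ)) ^ b := by
  rw [← Real.rpow_natCast, ← Real.rpow_natCast, ← Real.rpow_mul (by positivity)]
  refine Real.rpow_le_rpow_of_exponent_le hx ?_
  rwa [one_div_mul_eq_div, le_div_iff₀' hσ]

theorem exists_dvd_le_rpow_pow_cardDistinctFactors_le {n : ℕ} (hn : Squarefree n) {σ x : ℝ}
    (hσ₀ : 0 < σ) (hσ₁ : σ ≤ 1) (hx : 1 ≤ x) :
    ∃ d : ℕ, d ∣ n ∧ (d : ℝ) ≤ n ^ σ ∧ x ^ ω n ≤ (x ^ (1 / σ)) ^ (ω d + 1) := by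
  have hprime : ∀ p ∈ n.primeFactors, (1 : ℝ) ≤ p := fun p hp =>
    mod_cast (Nat.prime_of_mem_primeFactors hp).one_le
  obtain ⟨t, hts, htprod, htcard⟩ := exists_subset_prod_le_rpow hprime hσ₀.le hσ₁
  have hωt : ω (∏ p ∈ t, p) = #t := by
    rw [cardDistinctFactors_eq_card_primeFactors, Nat.primeFactors_prod]
    exact fun p hp => Nat.prime_of_mem_primeFactors (hts hp)
  have hprod := Nat.prod_primeFactors_of_squarefree hn
  refine ⟨∏ p ∈ t, p, ?_, ?_, ?_⟩
  · exact (prod_dvd_prod_of_subset _ _ _ hts).trans hprod.dvd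
  · rwa [← Nat.cast_prod, ← Nat.cast_prod, hprod] at htprod
  · refine pow_le_rpow_one_div_pow hx hσ₀ ?_
    rw [hωt, cardDistinctFactors_eq_card_primeFactors]
    exact_mod_cast htcard.le

/-! ### Summation over multiples in an interval -/

theorem card_Icc_ceil_floor_le {a b : ℝ} (ha : 0 ≤ a) (hab : a ≤ b) :
    (#(Icc ⌈a⌉₊ ⌊b⌋₊) : ℝ) ≤ b - a + 1 := by
  have hfloor : (⌊b⌋₊ : ℝ) ≤ b := Nat.floor_le (ha.trans hab)
  have hceil : a ≤ ⌈a⌉₊ := Nat.le_ceil a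
  rw [Nat.card_Icc]
  rcases le_total ⌈a⌉₊ (⌊b⌋₊ + 1) with h | h
  · push_cast [Nat.cast_sub h]
    linarith
  · rw [Nat.sub_eq_zero_of_le h]
    push_cast
    linarith

theorem card_filter_dvd_Icc_ceil_floor_le {a b : ℝ} (ha : 0 ≤ a) (hab : a ≤ b) {d : ℕ}
    (hd : 0 < d) : (#{n ∈ Icc ⌈a⌉₊ ⌊b⌋₊ | d ∣ n} : ℝ) ≤ (b - a) / d + 1 := by
  have hd' : (0 : ℝ) < d := mod_cast hd
  have hsubset : {n ∈ Icc ⌈a⌉₊ ⌊b⌋₊ | d ∣ n} ⊆ (Icc ⌈a / d⌉₊ ⌊b / d⌋₊).image (d * ·) := by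
    intro n hn
    obtain ⟨hn, m, rfl⟩ := mem_filter.mp hn
    rw [mem_Icc, Nat.ceil_le, Nat.le_floor_iff (ha.trans hab), Nat.cast_mul] at hn
    refine mem_image_of_mem _ (mem_Icc.mpr ⟨?_, ?_⟩)
    · exact Nat.ceil_le.mpr ((div_le_iff₀' hd').mpr hn.1)
    · exact Nat.le_floor ((le_div_iff₀' hd').mpr hn.2)
  calc (#{n ∈ Icc ⌈a⌉₊ ⌊b⌋₊ | d ∣ n} : ℝ)
      ≤ #(Icc ⌈a / d⌉₊ ⌊b / d⌋₊) := mod_cast (card_le_card hsubset).trans card_image_le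
    _ ≤ b / d - a / d + 1 := card_Icc_ceil_floor_le (by positivity) (by gcongr)
    _ = (b - a) / d + 1 := by rw [sub_div]

theorem sum_squarefree_pow_cardDistinctFactors_div_le (N : ℕ) {κ : ℝ} (hκ : 0 ≤ κ) :
    ∑ d ∈ Icc 1 N with Squarefree d, κ ^ ω d / d ≤ ∏ p ∈ Nat.primesLE N, (1 + κ / p) := by
  have hterm : ∀ d ∈ {d ∈ Icc 1 N | Squarefree d}, κ ^ ω d / d = ∏ p ∈ d.primeFactors, κ / p := by
    intro d hd
    rw [prod_div_distrib, prod_const, ← Nat.cast_prod,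
      Nat.prod_primeFactors_of_squarefree (mem_filter.mp hd).2,
      cardDistinctFactors_eq_card_primeFactors]
  have hinj : Set.InjOn Nat.primeFactors ({d ∈ Icc 1 N | Squarefree d} : Finset ℕ) :=
    Set.LeftInvOn.injOn (f₁' := fun s => ∏ p ∈ s, p) fun d hd =>
      Nat.prod_primeFactors_of_squarefree (mem_filter.mp (mem_coe.mp hd)).2
  rw [sum_congr rfl hterm, prod_one_add, ← sum_image (f := fun s : Finset ℕ => ∏ p ∈ s, κ / p) hinj]
  refine sum_le_sum_of_subset_of_nonneg ?_ fun s _ _ => by positivity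
  refine image_subset_iff.mpr fun d hd => mem_powerset.mpr fun p hp => ?_
  have hdN : d ≤ N := (mem_Icc.mp (mem_filter.mp hd).1).2
  exact Nat.mem_primesLE.mpr
    ⟨(Nat.le_of_mem_primeFactors hp).trans hdN, Nat.prime_of_mem_primeFactors hp⟩

theorem pow_cardDistinctFactors_le_sum_dvd {n N : ℕ} (hn : Squarefree n) {σ x : ℝ}
    (hσ₀ : 0 < σ) (hσ₁ : σ ≤ 1) (hx : 1 ≤ x) (hN : (n : ℝ) ^ σ < N + 1) :
    x ^ ω n ≤ ∑ d ∈ Icc 1 N with Squarefree d,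
      if d ∣ n then (x ^ (1 / σ)) ^ (ω d + 1) else 0 := by
  obtain ⟨d, hdn, hd, hle⟩ := exists_dvd_le_rpow_pow_cardDistinctFactors_le hn hσ₀ hσ₁ hx
  have hdmem : d ∈ {d ∈ Icc 1 N | Squarefree d} := by
    refine mem_filter.mpr ⟨mem_Icc.mpr ⟨?_, ?_⟩, hn.squarefree_of_dvd hdn⟩
    · exact Nat.pos_of_dvd_of_pos hdn hn.ne_zero.bot_lt
    · exact Nat.lt_succ_iff.mp (by exact_mod_cast hd.trans_lt hN)
  refine hle.trans ?_
  simpa only [if_pos hdn] using single_le_sum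
    (f := fun d => if d ∣ n then (x ^ (1 / σ)) ^ (ω d + 1) else 0)
    (fun d _ => by positivity) hdmem

theorem rpow_le_two_mul_of_le_add {σ X Y z : ℝ} (hσ₀ : 0 ≤ σ) (hσ₁ : σ ≤ 1) (hX : 0 ≤ X)
    (hXY : X ^ σ ≤ Y) (hYX : Y ≤ X) (hz₀ : 0 ≤ z) (hz : z ≤ X + Y) : z ^ σ ≤ 2 * Y :=
  calc z ^ σ ≤ (2 * X) ^ σ := by gcongr; linarith
    _ = 2 ^ σ * X ^ σ := Real.mul_rpow zero_le_two hX
    _ ≤ 2 ^ (1 : ℝ) * Y := by gcongr; norm_num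
    _ = 2 * Y := by rw [Real.rpow_one]

theorem sum_squarefree_pow_cardDistinctFactors_le {σ X Y x : ℝ} (hσ₀ : 0 < σ) (hσ₁ : σ ≤ 1)
    (hX : 0 < X) (hXY : X ^ σ ≤ Y) (hYX : Y ≤ X) (hx : 1 ≤ x) :
    ∑ n ∈ Icc ⌈X⌉₊ ⌊X + Y⌋₊ with Squarefree n, x ^ ω n ≤
      3 * Y * (x ^ (1 / σ) * ∏ p ∈ Nat.primesLE ⌊2 * Y⌋₊, (1 + x ^ (1 / σ) / p)) := by
  have hY : 0 < Y := (Real.rpow_pos_of_pos hX σ).trans_le hXY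
  set κ := x ^ (1 / σ)
  set D := {d ∈ Icc 1 ⌊2 * Y⌋₊ | Squarefree d}
  have hpointwise : ∀ n ∈ {n ∈ Icc ⌈X⌉₊ ⌊X + Y⌋₊ | Squarefree n},
      x ^ ω n ≤ ∑ d ∈ D, if d ∣ n then κ ^ (ω d + 1) else 0 := by
    intro n hn
    rw [mem_filter, mem_Icc, Nat.le_floor_iff (by positivity)] at hn
    refine pow_cardDistinctFactors_le_sum_dvd hn.2 hσ₀ hσ₁ hx ?_
    exact (rpow_le_two_mul_of_le_add hσ₀.le hσ₁ hX.le hXY hYX (by positivity) hn.1.2).trans_lt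
      (Nat.lt_floor_add_one _)
  have hcount : ∀ d ∈ D, (#{n ∈ Icc ⌈X⌉₊ ⌊X + Y⌋₊ | d ∣ n} : ℝ) ≤ 3 * Y / d := by
    intro d hd
    obtain ⟨hd₁, hdY⟩ := mem_Icc.mp (mem_filter.mp hd).1
    have hd₀ : (0 : ℝ) < d := mod_cast hd₁
    have hd_le : (d : ℝ) ≤ 2 * Y := (Nat.le_floor_iff (by positivity)).mp hdY
    calc (#{n ∈ Icc ⌈X⌉₊ ⌊X + Y⌋₊ | d ∣ n} : ℝ)
        ≤ (X + Y - X) / d + 1 := card_filter_dvd_Icc_ceil_floor_le hX.le (by linarith) hd₁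
      _ = (Y + d) / d := by rw [add_sub_cancel_left, div_add_one hd₀.ne']
      _ ≤ 3 * Y / d := by gcongr; linarith
  calc ∑ n ∈ Icc ⌈X⌉₊ ⌊X + Y⌋₊ with Squarefree n, x ^ ω n
      ≤ ∑ n ∈ Icc ⌈X⌉₊ ⌊X + Y⌋₊ with Squarefree n,
          ∑ d ∈ D, if d ∣ n then κ ^ (ω d + 1) else 0 := sum_le_sum hpointwise
    _ ≤ ∑ n ∈ Icc ⌈X⌉₊ ⌊X + Y⌋₊, ∑ d ∈ D, if d ∣ n then κ ^ (ω d + 1) else 0 :=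
        sum_le_sum_of_subset_of_nonneg (filter_subset _ _) fun n _ _ => by positivity
    _ = ∑ d ∈ D, #{n ∈ Icc ⌈X⌉₊ ⌊X + Y⌋₊ | d ∣ n} * κ ^ (ω d + 1) := by
        rw [sum_comm]
        simp only [← sum_filter, sum_const, nsmul_eq_mul]
    _ ≤ ∑ d ∈ D, 3 * Y / d * κ ^ (ω d + 1) := by gcongr with d hd; exact hcount d hd
    _ = 3 * Y * (κ * ∑ d ∈ D, κ ^ ω d / d) := by
        simp only [mul_sum]
        exact sum_congr rfl fun d _ => by ring
    _ ≤ 3 * Y * (κ * ∏ p ∈ Nat.primesLE ⌊2 * Y⌋₊, (1 + κ / p)) := by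
        gcongr
        exact sum_squarefree_pow_cardDistinctFactors_div_le _ (by positivity)

/-! ### Reciprocals of primes -/

theorem sub_div_le_log_sub_log {x y : ℝ} (hx : 0 < x) (hy : 0 < y) :
    (y - x) / y ≤ Real.log y - Real.log x := by
  have h := Real.one_sub_inv_le_log_of_pos (div_pos hy hx)
  rwa [inv_div, one_sub_div hy.ne', Real.log_div hy.ne' hx.ne'] at h

theorem sub_div_mul_log_le_log_log_sub_log_log {x y : ℝ} (hx : 1 < x) (hy : 1 < y) :
    (y - x) / (y * Real.log y) ≤ Real.log (Real.log y) - Real.log (Real.log x) := by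
  have hlog := Real.log_pos hy
  rw [← div_div]
  calc (y - x) / y / Real.log y
      ≤ (Real.log y - Real.log x) / Real.log y := by
        gcongr
        exact sub_div_le_log_sub_log (by positivity) (by positivity)
    _ ≤ _ := sub_div_le_log_sub_log (Real.log_pos hx) hlog

theorem sum_primesLE_one_div_succ {N : ℕ} (hN : 1 ≤ N) :
    ∑ p ∈ Nat.primesLE (N + 1), (1 / p : ℝ) = ∑ p ∈ Nat.primesLE N, (1 / p : ℝ) +
      (Chebyshev.theta (N + 1 : ℕ) - Chebyshev.theta N) /
        ((N + 1 : ℕ) * Real.log (N + 1 : ℕ)) := by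
  have hlog : 0 < Real.log (N + 1 : ℕ) := Real.log_pos (by exact_mod_cast Nat.lt_succ_iff.mpr hN)
  simp only [Chebyshev.theta_eq_sum_primesLE_log, Nat.primesLE_succ]
  split_ifs with hp
  · rw [sum_insert (Nat.notMem_primesLE N), sum_insert (Nat.notMem_primesLE N)]
    field_simp
    ring
  · simp

-- Partial summation against `1 / (n log n)`: the fraction on the left is the boundary term.
theorem sum_primesLE_one_div_add_le {N : ℕ} (hN : 2 ≤ N) :
    ∑ p ∈ Nat.primesLE N, (1 / p : ℝ) +
        (Real.log 4 * N - Chebyshev.theta N) / (N * Real.log N) ≤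
      Real.log 4 * Real.log (Real.log N) + 4 := by
  induction N, hN using Nat.le_induction with
  | base =>
    have hprimes : Nat.primesLE 2 = {2} := by decide
    have hlog2 : 0 < Real.log 2 := Real.log_pos one_lt_two
    have htheta : Chebyshev.theta (2 : ℕ) = Real.log 2 := by
      rw [Chebyshev.theta_eq_sum_primesLE_log, hprimes, sum_singleton, Nat.cast_ofNat]
    have hloglog : 2 * Real.log 2 - 2 ≤ 2 * Real.log 2 * Real.log (Real.log 2) := by
      calc 2 * Real.log 2 - 2 = 2 * Real.log 2 * (1 - (Real.log 2)⁻¹) := by field_simp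
        _ ≤ _ := by gcongr; exact Real.one_sub_inv_le_log_of_pos hlog2
    rw [hprimes, sum_singleton, htheta, Real.log_four_eq, Nat.cast_ofNat]
    calc 1 / 2 + (2 * Real.log 2 * 2 - Real.log 2) / (2 * Real.log 2) = 2 := by field_simp; ring
      _ ≤ 2 * Real.log 2 - 2 + 4 := by linarith
      _ ≤ _ := by gcongr
  | succ N hN ih =>
    have hN' : (1 : ℝ) < N := by exact_mod_cast hN
    have hlogN : 0 < Real.log N := Real.log_pos hN'
    have hle : (N : ℝ) ≤ (N + 1 : ℕ) := by push_cast; linarith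
    have hchebyshev : 0 ≤ Real.log 4 * N - Chebyshev.theta N :=
      sub_nonneg.mpr (Chebyshev.theta_le_log4_mul_x (by positivity))
    have hboundary : (Real.log 4 * N - Chebyshev.theta N) / ((N + 1 : ℕ) * Real.log (N + 1 : ℕ)) ≤
        (Real.log 4 * N - Chebyshev.theta N) / (N * Real.log N) := by
      gcongr
    have hloglog := mul_le_mul_of_nonneg_left
      (sub_div_mul_log_le_log_log_sub_log_log hN' (hN'.trans_le hle))
      (Real.log_nonneg (show (1 : ℝ) ≤ 4 by norm_num))
    rw [sum_primesLE_one_div_succ (by omega)]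
    calc _ = ∑ p ∈ Nat.primesLE N, (1 / p : ℝ) +
          (Real.log 4 * N - Chebyshev.theta N) / ((N + 1 : ℕ) * Real.log (N + 1 : ℕ)) +
          Real.log 4 * (((N + 1 : ℕ) - N) / ((N + 1 : ℕ) * Real.log (N + 1 : ℕ))) := by ring
      _ ≤ _ := by linarith

theorem sum_primesLE_one_div_le {N : ℕ} (hN : 2 ≤ N) :
    ∑ p ∈ Nat.primesLE N, (1 / p : ℝ) ≤ Real.log 4 * Real.log (Real.log N) + 4 := by
  have hlogN : 0 < Real.log N := Real.log_pos (by exact_mod_cast hN)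
  have hchebyshev : 0 ≤ Real.log 4 * N - Chebyshev.theta N :=
    sub_nonneg.mpr (Chebyshev.theta_le_log4_mul_x (by positivity))
  exact (le_add_of_nonneg_right (by positivity)).trans (sum_primesLE_one_div_add_le hN)

/-! ### The Euler product -/

theorem log_log_floor_two_mul_le {X : ℝ} (hX : 2 ≤ X) :
    Real.log (Real.log ⌊2 * X⌋₊) ≤ Real.log (Real.log X) + 1 := by
  have hfloor₂ : (2 : ℝ) ≤ ⌊2 * X⌋₊ := by exact_mod_cast Nat.le_floor (by push_cast; linarith)
  have hfloor : (⌊2 * X⌋₊ : ℝ) ≤ X ^ 2 := (Nat.floor_le (by linarith)).trans (by nlinarith)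
  have hlogX : 0 < Real.log X := Real.log_pos (by linarith)
  calc Real.log (Real.log ⌊2 * X⌋₊)
      ≤ Real.log (Real.log (X ^ 2)) := by
        have := Real.log_pos (show 1 < (⌊2 * X⌋₊ : ℝ) by linarith)
        gcongr
    _ = Real.log 2 + Real.log (Real.log X) := by
        rw [Real.log_pow, Nat.cast_ofNat, Real.log_mul two_ne_zero hlogX.ne']
    _ ≤ Real.log (Real.log X) + 1 := by linarith [Real.log_two_lt_d9]

theorem one_half_le_log_log {X : ℝ} (hX : 8 ≤ X) : 1 / 2 ≤ Real.log (Real.log X) := by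
  have hlogX : 2 ≤ Real.log X := by
    calc 2 ≤ 3 * Real.log 2 := by linarith [Real.log_two_gt_d9]
      _ = Real.log (2 ^ 3) := by rw [Real.log_pow, Nat.cast_ofNat]
      _ ≤ Real.log X := Real.log_le_log (by norm_num) (by linarith)
  calc 1 / 2 ≤ Real.log 2 := by linarith [Real.log_two_gt_d9]
    _ ≤ Real.log (Real.log X) := Real.log_le_log two_pos hlogX

theorem exists_mul_prod_one_add_div_le_exp (N : ℕ) :
    ∃ C : ℝ, ∀ κ : ℝ, 0 ≤ κ → κ * ∏ p ∈ Nat.primesLE N, (1 + κ / p) ≤ C * Real.exp κ := by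
  set m := #(Nat.primesLE N)
  refine ⟨(m + 1).factorial * Real.exp 1, fun κ hκ => ?_⟩
  calc κ * ∏ p ∈ Nat.primesLE N, (1 + κ / p)
      ≤ (1 + κ) * ∏ p ∈ Nat.primesLE N, (1 + κ) := by
        gcongr with p hp
        · linarith
        · exact div_le_self hκ (mod_cast (Nat.prime_of_mem_primesLE hp).one_le)
    _ = (1 + κ) ^ (m + 1) := by rw [prod_const, pow_succ']
    _ ≤ (m + 1).factorial * Real.exp (1 + κ) := by
        rw [← div_le_iff₀' (by positivity)]
        exact Real.pow_div_factorial_le_exp _ (by positivity) _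
    _ = (m + 1).factorial * Real.exp 1 * Real.exp κ := by rw [Real.exp_add, mul_assoc]

theorem mul_prod_one_add_div_le_exp {X κ : ℝ} (hX : 2 ≤ X) (hκ : 0 ≤ κ) :
    κ * ∏ p ∈ Nat.primesLE ⌊2 * X⌋₊, (1 + κ / p) ≤
      Real.exp (κ * (Real.log 4 * Real.log (Real.log X) + Real.log 4 + 5)) := by
  have hsum : ∑ p ∈ Nat.primesLE ⌊2 * X⌋₊, κ / p ≤
      κ * (Real.log 4 * Real.log (Real.log X) + Real.log 4 + 4) := by
    calc ∑ p ∈ Nat.primesLE ⌊2 * X⌋₊, κ / p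
        = κ * ∑ p ∈ Nat.primesLE ⌊2 * X⌋₊, (1 / p : ℝ) := by
          simp only [mul_sum, mul_one_div]
      _ ≤ κ * (Real.log 4 * Real.log (Real.log ⌊2 * X⌋₊) + 4) := by
          gcongr
          exact sum_primesLE_one_div_le (Nat.le_floor (by push_cast; linarith))
      _ ≤ κ * (Real.log 4 * (Real.log (Real.log X) + 1) + 4) := by
          gcongr
          exact log_log_floor_two_mul_le hX
      _ = _ := by ring
  calc κ * ∏ p ∈ Nat.primesLE ⌊2 * X⌋₊, (1 + κ / p)
      ≤ Real.exp κ * Real.exp (∑ p ∈ Nat.primesLE ⌊2 * X⌋₊, κ / p) := by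
        gcongr
        · linarith [Real.add_one_le_exp κ]
        · exact Real.prod_one_add_le_exp_sum _ fun p => by positivity
    _ ≤ Real.exp (κ * (Real.log 4 * Real.log (Real.log X) + Real.log 4 + 5)) := by
        rw [← Real.exp_add]
        gcongr
        linarith

theorem exists_mul_prod_one_add_div_le :
    ∃ C : ℝ, 0 < C ∧ ∀ X κ : ℝ, 10 ≤ X → 0 ≤ κ →
      κ * ∏ p ∈ Nat.primesLE ⌊2 * X⌋₊, (1 + κ / p) ≤
        C * Real.exp (2 * κ * Real.log (Real.log X)) := by
  obtain ⟨C, hC⟩ := exists_mul_prod_one_add_div_le_exp ⌊2 * Real.exp (Real.exp 11)⌋₊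
  refine ⟨max C 1, by positivity, fun X κ hX hκ => ?_⟩
  have hlogX : 0 < Real.log X := Real.log_pos (by linarith)
  rcases le_total (Real.log (Real.log X)) 11 with hsmall | hlarge
  · have hX_le : X ≤ Real.exp (Real.exp 11) :=
      (Real.log_le_iff_le_exp (by linarith)).mp ((Real.log_le_iff_le_exp hlogX).mp hsmall)
    calc κ * ∏ p ∈ Nat.primesLE ⌊2 * X⌋₊, (1 + κ / p)
        ≤ κ * ∏ p ∈ Nat.primesLE ⌊2 * Real.exp (Real.exp 11)⌋₊, (1 + κ / p) := by
          gcongr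
          · exact fun _ _ _ => le_add_of_nonneg_right (by positivity)
          · exact Nat.primesLE_mono (by gcongr)
      _ ≤ C * Real.exp κ := hC κ hκ
      _ ≤ max C 1 * Real.exp (2 * κ * Real.log (Real.log X)) := by
          gcongr
          · exact le_max_left _ _
          · nlinarith [one_half_le_log_log (show 8 ≤ X by linarith)]
  · have hlog4 : Real.log 4 ≤ 1.4 := by linarith [Real.log_four_eq, Real.log_two_lt_d9]
    calc κ * ∏ p ∈ Nat.primesLE ⌊2 * X⌋₊, (1 + κ / p)
        ≤ Real.exp (κ * (Real.log 4 * Real.log (Real.log X) + Real.log 4 + 5)) :=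
          mul_prod_one_add_div_le_exp (by linarith) hκ
      _ ≤ Real.exp (κ * (2 * Real.log (Real.log X))) := by
          gcongr
          nlinarith
      _ = 1 * Real.exp (2 * κ * Real.log (Real.log X)) := by ring_nf
      _ ≤ max C 1 * Real.exp (2 * κ * Real.log (Real.log X)) := by
          gcongr
          exact le_max_right _ _

theorem sum_tauk_squarefree_short_interval_general :
    ∃ K : ℝ, 0 < K ∧
      ∀ σ X Y : ℝ, 0 < σ → σ ≤ 1 → 10 ≤ X → X ^ σ ≤ Y → Y ≤ X → ∀ k : ℕ, 1 ≤ k →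
        ∑ n ∈ Icc ⌈X⌉₊ ⌊X + Y⌋₊ with Squarefree n, (tauk k n : ℝ) ≤
          K * Y * Real.exp (2 * (k : ℝ) ^ (1 / σ) * Real.log (Real.log X)) := by
  obtain ⟨C, hC₀, hC⟩ := exists_mul_prod_one_add_div_le
  refine ⟨3 * C, by positivity, fun σ X Y hσ₀ hσ₁ hX hXY hYX k hk => ?_⟩
  have hY : 0 < Y := (Real.rpow_pos_of_pos (by linarith) σ).trans_le hXY
  set κ := (k : ℝ) ^ (1 / σ)
  calc ∑ n ∈ Icc ⌈X⌉₊ ⌊X + Y⌋₊ with Squarefree n, (tauk k n : ℝ)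
      = ∑ n ∈ Icc ⌈X⌉₊ ⌊X + Y⌋₊ with Squarefree n, (k : ℝ) ^ ω n :=
        sum_congr rfl fun n hn => by rw [tauk_of_squarefree (mem_filter.mp hn).2, Nat.cast_pow]
    _ ≤ 3 * Y * (κ * ∏ p ∈ Nat.primesLE ⌊2 * Y⌋₊, (1 + κ / p)) :=
        sum_squarefree_pow_cardDistinctFactors_le hσ₀ hσ₁ (by linarith) hXY hYX (mod_cast hk)
    _ ≤ 3 * Y * (κ * ∏ p ∈ Nat.primesLE ⌊2 * X⌋₊, (1 + κ / p)) := by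
        gcongr
        · exact fun _ _ _ => le_add_of_nonneg_right (by positivity)
        · exact Nat.primesLE_mono (by gcongr)
    _ ≤ 3 * Y * (C * Real.exp (2 * κ * Real.log (Real.log X))) :=
        mul_le_mul_of_nonneg_left (hC X κ hX (by positivity)) (by positivity)
    _ = 3 * C * Y * Real.exp (2 * κ * Real.log (Real.log X)) := by ring

theorem sum_tauk_squarefree_short_interval :
    ∃ K : ℝ, 0 < K ∧
      ∀ σ X Y : ℝ, 1 / 2 ≤ σ → σ ≤ 1 → 10 ≤ X → X ^ σ ≤ Y → Y ≤ X →
      ∀ k : ℕ, 1 ≤ k → (k : ℝ) ≤ Real.log X →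
        ∑ n ∈ (Finset.Icc ⌈X⌉₊ ⌊X + Y⌋₊).filter fun n => Squarefree n, (tauk k n : ℝ) ≤
          K * Y * Real.log X ^ (4 : ℕ) *
            Real.exp (2 * (k : ℝ) ^ (1 / σ) * Real.log (Real.log X)) := by
  obtain ⟨K, hK₀, hK⟩ := sum_tauk_squarefree_short_interval_general
  refine ⟨K, hK₀, fun σ X Y hσ₀ hσ₁ hX hXY hYX k hk hkX => ?_⟩
  have hY : 0 < Y := (Real.rpow_pos_of_pos (by linarith) σ).trans_le hXY
  have hlogX : 1 ≤ Real.log X := (Nat.one_le_cast.mpr hk).trans hkX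
  refine (hK σ X Y (by linarith) hσ₁ hX hXY hYX k hk).trans ?_
  have hKY : K * Y ≤ K * Y * Real.log X ^ 4 :=
    le_mul_of_one_le_right (by positivity) (one_le_pow₀ hlogX)
  gcongr
end

section
/- Fix α ∈ (0,1) and σ ∈ [9/10, 1]. There exist constants M_α ≥ 1 and K_α > 0 such that for every real M ≥ M_α, every integer k with 1 ≤ k ≤ log M, and every real H with M^σ ≤ H ≤ M, one has ∑_{m ∈ [M, M+H], m ∈ Γ_α(M)} τ_k(m) ≤ K_α · H · exp(20 · k^{1/σ²} · log log M). -/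
open Finset

/-- `Ω(n)`: the number of prime factors of `n` counted with multiplicity. -/
def bigOmega (n : ℕ) : ℕ := n.primeFactorsList.length

/-!
Apply a knapsack argument to the prime powers `p ^ v` exactly dividing `m`, with weights
`log (p ^ v)` and values `log τ_k(p ^ v) ≤ k * log (v + 1)`: some divisor `d ∣ m` with `d ≤ m ^ σ`
carries a share `σ` of `log τ_k(m)`, up to the value of a single prime power. Hence `τ_k(m)` is at
most `τ_k(d) ^ (1 / σ) * (log₂ m + 1) ^ (k / σ)`. Since `τ_k(p ^ a)` is the product of the factors
`(k + j) / (j + 1)`, Jensen's inequality gives `τ_k(d) ^ (1 / σ) ≤ τ_K(d)` with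
`K = ⌈k ^ (1 / σ)⌉`. As `d ≤ (M + H) ^ σ ≤ 2 * H`, at most `3 * H / d` integers of the interval are
multiples of `d`, so after interchanging the sums only `∑ τ_K(d) / d` remains, and this is at most
the `K`-th power of a harmonic sum.
-/

section Knapsack

variable {ι : Type*} {S : Finset ι}

theorem exists_subset_sum_le_and_mul_sum_le {R : Type*} [CommRing R] [LinearOrder R]
    [IsStrictOrderedRing R] {w f : ι → R} {t F : R} (hw : ∀ i ∈ S, 0 < w i)
    (hf : ∀ i ∈ S, 0 ≤ f i) (hF : 0 ≤ F) (hfF : ∀ i ∈ S, f i ≤ F) (ht0 : 0 ≤ t) (ht1 : t ≤ 1) :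
    ∃ T ⊆ S, ∑ i ∈ T, w i ≤ t * ∑ i ∈ S, w i ∧ t * ∑ i ∈ S, f i ≤ ∑ i ∈ T, f i + F := by
  classical
  rcases S.eq_empty_or_nonempty with rfl | hS
  · exact ⟨∅, subset_rfl, by simp, by simpa using hF⟩
  rcases ht0.eq_or_lt with rfl | ht0
  · exact ⟨∅, empty_subset _, by simp, by simpa using hF⟩
  set W := ∑ i ∈ S, w i
  set V := ∑ i ∈ S, f i
  have hW : 0 < W := sum_pos hw hS
  have hV : 0 ≤ V := sum_nonneg hf
  -- Among the subsets of weight at least `t * W` whose density `∑ f / ∑ w` is at least that of `S`,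
  -- take a minimal one; `T` is obtained from it by removing an item of least density.
  obtain ⟨U, ⟨hUS, hUw, hUf⟩, hUmin⟩ := exists_minimal_of_wellFoundedLT
    (fun U : Finset ι => U ⊆ S ∧ t * W ≤ ∑ i ∈ U, w i ∧ (∑ i ∈ U, w i) * V ≤ (∑ i ∈ U, f i) * W)
    ⟨S, subset_rfl, mul_le_of_le_one_left hW.le ht1, (mul_comm W V).le⟩
  have hUpos : 0 < ∑ i ∈ U, w i := (mul_pos ht0 hW).trans_le hUw
  obtain ⟨q, hqU, hq⟩ := exists_le_of_sum_le (s := U) (nonempty_of_sum_ne_zero hUpos.ne')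
    (f := fun i => f i * ∑ j ∈ U, w j) (g := fun i => w i * ∑ j ∈ U, f j)
    (by rw [← sum_mul, ← sum_mul, mul_comm])
  have hwq := add_sum_erase U w hqU
  have hfq := add_sum_erase U f hqU
  have hTS : U.erase q ⊆ S := (erase_subset q U).trans hUS
  have hdensity : (∑ i ∈ U.erase q, w i) * V ≤ (∑ i ∈ U.erase q, f i) * W := by
    have hTU : (∑ i ∈ U.erase q, w i) * ∑ i ∈ U, f i ≤ (∑ i ∈ U.erase q, f i) * ∑ i ∈ U, w i := by
      linear_combination hq + (∑ i ∈ U, f i) * hwq - (∑ i ∈ U, w i) * hfq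
    have hTw : 0 ≤ ∑ i ∈ U.erase q, w i := sum_nonneg fun i hi => (hw i (hTS hi)).le
    refine le_of_mul_le_mul_right ?_ hUpos
    linear_combination hTU * W + (∑ i ∈ U.erase q, w i) * hUf
  refine ⟨U.erase q, hTS, ?_, ?_⟩
  · by_contra! hTw
    exact notMem_erase q U (hUmin ⟨hTS, hTw.le, hdensity⟩ (erase_subset q U) hqU)
  · refine le_of_mul_le_mul_right ?_ hW
    calc t * V * W = t * W * V := by ring
      _ ≤ (∑ i ∈ U, w i) * V := by gcongr
      _ ≤ (∑ i ∈ U, f i) * W := hUf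
      _ ≤ (∑ i ∈ U.erase q, f i + F) * W := by
        gcongr
        linarith [hfF q (hUS hqU)]

theorem exists_subset_prod_le_rpow_and_rpow_prod_le {w f : ι → ℝ} {t A : ℝ}
    (hw : ∀ i ∈ S, 1 < w i) (hf : ∀ i ∈ S, 1 ≤ f i) (hA : 1 ≤ A) (hfA : ∀ i ∈ S, f i ≤ A)
    (ht0 : 0 ≤ t) (ht1 : t ≤ 1) :
    ∃ T ⊆ S, ∏ i ∈ T, w i ≤ (∏ i ∈ S, w i) ^ t ∧ (∏ i ∈ S, f i) ^ t ≤ (∏ i ∈ T, f i) * A := by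
  have hw0 : ∀ i ∈ S, 0 < w i := fun i hi => one_pos.trans (hw i hi)
  have hf0 : ∀ i ∈ S, 0 < f i := fun i hi => one_pos.trans_le (hf i hi)
  obtain ⟨T, hTS, hTw, hTf⟩ := exists_subset_sum_le_and_mul_sum_le (S := S)
    (w := fun i => Real.log (w i)) (f := fun i => Real.log (f i)) (F := Real.log A)
    (fun i hi => Real.log_pos (hw i hi)) (fun i hi => Real.log_nonneg (hf i hi))
    (Real.log_nonneg hA) (fun i hi => Real.log_le_log (hf0 i hi) (hfA i hi)) ht0 ht1
  have hwT : 0 < ∏ i ∈ T, w i := prod_pos fun i hi => hw0 i (hTS hi)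
  have hfT : 0 < ∏ i ∈ T, f i := prod_pos fun i hi => hf0 i (hTS hi)
  have hA0 : 0 < A := one_pos.trans_le hA
  refine ⟨T, hTS, ?_, ?_⟩
  · rwa [Real.le_rpow_iff_log_le hwT (prod_pos hw0), Real.log_prod fun i hi => (hw0 i hi).ne',
      Real.log_prod fun i hi => (hw0 i (hTS hi)).ne']
  · rwa [Real.rpow_le_iff_le_log (prod_pos hf0) (by positivity), Real.log_mul hfT.ne' hA0.ne',
      Real.log_prod fun i hi => (hf0 i hi).ne', Real.log_prod fun i hi => (hf0 i (hTS hi)).ne']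

end Knapsack

theorem exists_dvd_le_rpow_and_rpow_apply_le {f : ArithmeticFunction ℝ} (hf : f.IsMultiplicative)
    {n : ℕ} (hn : n ≠ 0) {t A : ℝ} (ht0 : 0 ≤ t) (ht1 : t ≤ 1) (hA : 1 ≤ A)
    (hf1 : ∀ p ∈ n.primeFactors, 1 ≤ f (p ^ n.factorization p))
    (hfA : ∀ p ∈ n.primeFactors, f (p ^ n.factorization p) ≤ A) :
    ∃ d, d ∣ n ∧ (d : ℝ) ≤ (n : ℝ) ^ t ∧ f n ^ t ≤ f d * A := by
  have hprime : ∀ p ∈ n.primeFactors, p.Prime := fun p => Nat.prime_of_mem_primeFactors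
  have hn_eq : ∏ p ∈ n.primeFactors, p ^ n.factorization p = n :=
    Nat.prod_factorization_pow_eq_self hn
  obtain ⟨T, hT, hTn, hTf⟩ := exists_subset_prod_le_rpow_and_rpow_prod_le
    (w := fun p => ((p ^ n.factorization p : ℕ) : ℝ))
    (fun p hp => by
      have hv := (hprime p hp).factorization_pos_of_dvd hn (Nat.dvd_of_mem_primeFactors hp)
      exact_mod_cast Nat.one_lt_pow hv.ne' (hprime p hp).one_lt)
    hf1 hA hfA ht0 ht1
  have hfT : f (∏ p ∈ T, p ^ n.factorization p) = ∏ p ∈ T, f (p ^ n.factorization p) :=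
    hf.map_prod _ T fun p hp q hq hpq => Nat.Coprime.pow _ _
      ((Nat.coprime_primes (hprime p (hT hp)) (hprime q (hT hq))).2 hpq)
  refine ⟨∏ p ∈ T, p ^ n.factorization p, ?_, ?_, ?_⟩
  · exact (prod_dvd_prod_of_subset _ _ _ hT).trans hn_eq.dvd
  · rwa [← Nat.cast_prod, ← Nat.cast_prod, hn_eq] at hTn
  · rwa [hfT, hf.multiplicative_factorization f hn]

section DivisorFunction

open ArithmeticFunction
open scoped ArithmeticFunction.zeta

theorem tauk_eq_card_finMulAntidiag (k n : ℕ) : tauk k n = (Nat.finMulAntidiag k n).card := by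
  rw [tauk]
  congr 1
  ext f
  simp only [mem_filter, Fintype.mem_piFinset, mem_Icc, Nat.mem_finMulAntidiag]
  constructor
  · rintro ⟨hf, rfl⟩
    exact ⟨rfl, prod_ne_zero_iff.2 fun i _ => Nat.one_le_iff_ne_zero.1 (hf i).1⟩
  · rintro ⟨hf, hn⟩
    refine ⟨fun i => ?_, hf⟩
    have hdvd : f i ∣ n := hf ▸ dvd_prod_of_mem f (mem_univ i)
    exact ⟨Nat.pos_of_dvd_of_pos hdvd (Nat.pos_of_ne_zero hn),
      Nat.le_of_dvd (Nat.pos_of_ne_zero hn) hdvd⟩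

theorem card_finMulAntidiag_succ (k n : ℕ) :
    (Nat.finMulAntidiag (k + 1) n).card = ∑ d ∈ n.divisors, (Nat.finMulAntidiag k d).card := by
  rw [← card_sigma]
  refine card_nbij' (fun f => ⟨∏ i, Fin.tail f i, Fin.tail f⟩) (fun x => Fin.cons (n / x.1) x.2)
    ?_ ?_ ?_ ?_
  · intro f hf
    simp only [mem_coe, Nat.mem_finMulAntidiag, Fin.prod_univ_succ] at hf
    obtain ⟨rfl, hn⟩ := hf
    simp [Fin.tail, hn, right_ne_zero_of_mul hn]
  · rintro ⟨d, g⟩ hg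
    simp only [mem_coe, mem_sigma, Nat.mem_divisors, Nat.mem_finMulAntidiag] at hg
    obtain ⟨⟨hd, hn⟩, rfl, -⟩ := hg
    simp [Fin.prod_univ_succ, hn, Nat.div_mul_cancel hd]
  · intro f hf
    simp only [mem_coe, Nat.mem_finMulAntidiag, Fin.prod_univ_succ] at hf
    obtain ⟨rfl, hn⟩ := hf
    simp [Fin.tail, Nat.mul_div_cancel _ (Nat.pos_of_ne_zero (right_ne_zero_of_mul hn))]
  · rintro ⟨d, g⟩ hg
    simp only [mem_coe, mem_sigma, Nat.mem_finMulAntidiag] at hg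
    obtain ⟨-, rfl, -⟩ := hg
    simp

theorem tauk_eq_zeta_pow_apply (k n : ℕ) : tauk k n = (ζ ^ k) n := by
  rw [tauk_eq_card_finMulAntidiag]
  induction k generalizing n with
  | zero =>
    by_cases hn : n = 1
    · simp [hn, Nat.finMulAntidiag_one]
    · simp [Nat.finMulAntidiag_zero_left hn, one_apply_ne hn]
  | succ k ih => simp only [card_finMulAntidiag_succ, pow_succ', zeta_mul_apply, ih]

theorem zeta_pow_apply_prime_pow (k : ℕ) {p : ℕ} (hp : p.Prime) (a : ℕ) :
    (ζ ^ k) (p ^ a) = Nat.multichoose k a := by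
  induction k generalizing a with
  | zero =>
    cases a with
    | zero => simp
    | succ a => simp [one_apply_ne (Nat.one_lt_pow a.succ_ne_zero hp.one_lt).ne']
  | succ k ihk =>
    rw [pow_succ', zeta_mul_apply, Nat.sum_divisors_prime_pow hp]
    simp only [ihk]
    induction a with
    | zero => simp
    | succ a iha => rw [sum_range_succ, iha, Nat.multichoose_succ_succ, add_comm]

theorem tauk_eq_prod_multichoose (k : ℕ) {n : ℕ} (hn : n ≠ 0) :
    tauk k n = ∏ p ∈ n.primeFactors, Nat.multichoose k (n.factorization p) := by
  rw [tauk_eq_zeta_pow_apply, isMultiplicative_zeta.pow.multiplicative_factorization _ hn]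
  exact prod_congr rfl fun p hp => zeta_pow_apply_prime_pow k (Nat.prime_of_mem_primeFactors hp) _

theorem multichoose_pos {k : ℕ} (hk : 1 ≤ k) (a : ℕ) : 0 < Nat.multichoose k a := by
  rw [Nat.multichoose_eq]
  exact Nat.choose_pos (by lia)

theorem multichoose_le_pow (k a : ℕ) : Nat.multichoose k a ≤ (a + 1) ^ k := by
  induction k generalizing a with
  | zero => cases a <;> simp
  | succ k ihk =>
    induction a with
    | zero => simp
    | succ a iha =>
      calc Nat.multichoose (k + 1) (a + 1)
          = Nat.multichoose k (a + 1) + Nat.multichoose (k + 1) a := Nat.multichoose_succ_succ k a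
        _ ≤ (a + 1 + 1) ^ k + (a + 1) ^ k * (a + 1) := add_le_add (ihk (a + 1)) iha
        _ ≤ (a + 1 + 1) ^ k + (a + 1 + 1) ^ k * (a + 1) := by gcongr; lia
        _ = (a + 1 + 1) ^ (k + 1) := by ring

theorem multichoose_succ_mul_succ (k a : ℕ) :
    Nat.multichoose k (a + 1) * (a + 1) = (k + a) * Nat.multichoose k a := by
  cases k with
  | zero => cases a <;> simp
  | succ k =>
    simpa [Nat.multichoose_eq, add_right_comm] using (Nat.add_one_mul_choose_eq (k + a) a).symm

theorem multichoose_rpow_le {k K : ℕ} {s : ℝ} (hs : 1 ≤ s) (hK : (k : ℝ) ^ s ≤ K) (a : ℕ) :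
    (Nat.multichoose k a : ℝ) ^ s ≤ Nat.multichoose K a := by
  induction a with
  | zero => simp
  | succ a ih =>
    have hratio (j : ℕ) : (Nat.multichoose j (a + 1) : ℝ) =
        (1 / (a + 1) * j + a / (a + 1)) * Nat.multichoose j a := by
      field_simp
      exact_mod_cast multichoose_succ_mul_succ j a
    have hconvex : (1 / (a + 1) * k + a / (a + 1) : ℝ) ^ s ≤ 1 / (a + 1) * k ^ s + a / (a + 1) := by
      simpa using (convexOn_rpow hs).2 (Set.mem_Ici.2 k.cast_nonneg) (Set.mem_Ici.2 zero_le_one)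
        (by positivity : (0 : ℝ) ≤ 1 / (a + 1)) (by positivity : (0 : ℝ) ≤ a / (a + 1))
        (by field_simp; ring)
    rw [hratio k, hratio K, Real.mul_rpow (by positivity) (by positivity)]
    gcongr
    exact hconvex.trans (by gcongr)

theorem tauk_rpow_le {k K : ℕ} {s : ℝ} (hs : 1 ≤ s) (hK : (k : ℝ) ^ s ≤ K) (n : ℕ) :
    (tauk k n : ℝ) ^ s ≤ tauk K n := by
  rcases eq_or_ne n 0 with rfl | hn
  · simp [tauk_eq_zeta_pow_apply, Real.zero_rpow (one_pos.trans_le hs).ne']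
  rw [tauk_eq_prod_multichoose k hn, tauk_eq_prod_multichoose K hn, Nat.cast_prod, Nat.cast_prod,
    ← Real.finsetProd_rpow _ _ fun p _ => Nat.cast_nonneg _]
  exact prod_le_prod (fun p _ => by positivity) fun p _ => multichoose_rpow_le hs hK _

theorem factorization_le_log_two (n p : ℕ) : n.factorization p ≤ Nat.log 2 n := by
  rcases eq_or_ne n 0 with rfl | hn
  · simp
  by_cases hp : p.Prime
  · exact Nat.le_log_of_pow_le one_lt_two
      ((Nat.pow_le_pow_left hp.two_le _).trans (Nat.ordProj_le p hn))
  · simp [Nat.factorization_eq_zero_of_not_prime n hp]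

theorem exists_dvd_le_rpow_and_tauk_le {k K n : ℕ} (hk : 1 ≤ k) (hn : n ≠ 0) {σ : ℝ} (hσ0 : 0 < σ)
    (hσ1 : σ ≤ 1) (hK : (k : ℝ) ^ (1 / σ) ≤ K) :
    ∃ d, d ∣ n ∧ (d : ℝ) ≤ (n : ℝ) ^ σ ∧
      (tauk k n : ℝ) ≤ tauk K d * (Nat.log 2 n + 1 : ℝ) ^ (k / σ) := by
  have hprime_pow : ∀ p ∈ n.primeFactors, ((ζ ^ k : ArithmeticFunction ℕ) : ArithmeticFunction ℝ)
      (p ^ n.factorization p) = Nat.multichoose k (n.factorization p) := fun p hp => by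
    rw [natCoe_apply, zeta_pow_apply_prime_pow k (Nat.prime_of_mem_primeFactors hp)]
  obtain ⟨d, hdn, hd, hle⟩ := exists_dvd_le_rpow_and_rpow_apply_le
    (f := ((ζ ^ k : ArithmeticFunction ℕ) : ArithmeticFunction ℝ)) (A := (Nat.log 2 n + 1) ^ k)
    isMultiplicative_zeta.pow.natCast hn hσ0.le hσ1 (one_le_pow₀ (by simp))
    (fun p hp => by
      rw [hprime_pow p hp]
      exact_mod_cast multichoose_pos hk _)
    (fun p hp => by
      rw [hprime_pow p hp]
      exact_mod_cast (multichoose_le_pow k _).trans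
        (Nat.pow_le_pow_left (Nat.succ_le_succ (factorization_le_log_two n p)) k))
  simp only [natCoe_apply, ← tauk_eq_zeta_pow_apply] at hle
  refine ⟨d, hdn, hd, ?_⟩
  calc (tauk k n : ℝ) = ((tauk k n : ℝ) ^ σ) ^ (1 / σ) := by
        rw [← Real.rpow_mul (by positivity), mul_one_div_cancel hσ0.ne', Real.rpow_one]
    _ ≤ (tauk k d * (Nat.log 2 n + 1 : ℝ) ^ k) ^ (1 / σ) := by gcongr
    _ = (tauk k d : ℝ) ^ (1 / σ) * (Nat.log 2 n + 1 : ℝ) ^ (k / σ) := by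
        rw [Real.mul_rpow (by positivity) (by positivity), ← Real.rpow_natCast,
          ← Real.rpow_mul (by positivity), mul_one_div]
    _ ≤ tauk K d * (Nat.log 2 n + 1 : ℝ) ^ (k / σ) := by
        gcongr
        exact tauk_rpow_le (one_le_one_div hσ0 hσ1) hK d

theorem sum_Ioc_mul_le {f g : ArithmeticFunction ℝ} (hf : ∀ n, 0 ≤ f n) (hg : ∀ n, 0 ≤ g n)
    (N : ℕ) : ∑ n ∈ Ioc 0 N, (f * g) n ≤ (∑ n ∈ Ioc 0 N, f n) * ∑ n ∈ Ioc 0 N, g n := by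
  rw [sum_Ioc_mul_eq_sum_prod_filter, sum_mul_sum, ← sum_product']
  exact sum_le_sum_of_subset_of_nonneg (filter_subset _ _)
    fun x _ _ => mul_nonneg (hf x.1) (hg x.2)

theorem sum_Ioc_mul_div_le {f g : ArithmeticFunction ℝ} (hf : ∀ n, 0 ≤ f n) (hg : ∀ n, 0 ≤ g n)
    (N : ℕ) : ∑ n ∈ Ioc 0 N, (f * g) n / n ≤
      (∑ n ∈ Ioc 0 N, f n / n) * ∑ n ∈ Ioc 0 N, g n / n := by
  let over_id (h : ArithmeticFunction ℝ) : ArithmeticFunction ℝ := h.pdiv ArithmeticFunction.id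
  have over_id_mul : over_id (f * g) = over_id f * over_id g := by
    ext n
    simp only [over_id, pdiv_apply, mul_apply, natCoe_apply, id_apply, sum_div]
    refine sum_congr rfl fun x hx => ?_
    rw [← (Nat.mem_divisorsAntidiagonal.1 hx).1, Nat.cast_mul, mul_div_mul_comm]
  have h := sum_Ioc_mul_le (f := over_id f) (g := over_id g)
    (fun n => div_nonneg (hf n) (by simp)) (fun n => div_nonneg (hg n) (by simp)) N
  rw [← over_id_mul] at h
  simpa [over_id] using h

theorem sum_tauk_div_le (k N : ℕ) :
    ∑ n ∈ Ioc 0 N, (tauk k n : ℝ) / n ≤ (1 + Real.log N) ^ k := by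
  have hharmonic : ∑ n ∈ Ioc 0 N, (ζ n : ℝ) / n ≤ 1 + Real.log N := by
    calc ∑ n ∈ Ioc 0 N, (ζ n : ℝ) / n = ∑ n ∈ Icc 1 N, (n : ℝ)⁻¹ :=
          sum_congr rfl fun n hn => by simp [zeta_apply_ne (mem_Ioc.1 hn).1.ne']
      _ = (harmonic N : ℝ) := by simp [harmonic_eq_sum_Icc]
      _ ≤ 1 + Real.log N := harmonic_le_one_add_log N
  induction k with
  | zero =>
    calc ∑ n ∈ Ioc 0 N, (tauk 0 n : ℝ) / n = ∑ n ∈ Ioc 0 N, if n = 1 then (1 : ℝ) else 0 :=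
          sum_congr rfl fun n _ => by by_cases hn : n = 1 <;> simp [tauk_eq_zeta_pow_apply, hn]
      _ ≤ (1 + Real.log N) ^ 0 := by
          rw [sum_ite_eq', pow_zero]
          split_ifs <;> norm_num
  | succ k ih =>
    let zetaPow : ArithmeticFunction ℝ := (ζ ^ k : ArithmeticFunction ℕ)
    let zeta : ArithmeticFunction ℝ := (ζ : ArithmeticFunction ℕ)
    have hzetaPow (n : ℕ) : zetaPow n = tauk k n := by
      rw [natCoe_apply, tauk_eq_zeta_pow_apply]
    calc ∑ n ∈ Ioc 0 N, (tauk (k + 1) n : ℝ) / n = ∑ n ∈ Ioc 0 N, (zetaPow * zeta) n / n := by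
          simp only [zetaPow, zeta, tauk_eq_zeta_pow_apply, pow_succ, ← natCoe_mul, natCoe_apply]
      _ ≤ (∑ n ∈ Ioc 0 N, zetaPow n / n) * ∑ n ∈ Ioc 0 N, zeta n / n :=
          sum_Ioc_mul_div_le (fun _ => Nat.cast_nonneg _) (fun _ => Nat.cast_nonneg _) N
      _ ≤ (1 + Real.log N) ^ k * (1 + Real.log N) := by
          simp only [hzetaPow, zeta, natCoe_apply]
          gcongr
      _ = (1 + Real.log N) ^ (k + 1) := (pow_succ _ _).symm

end DivisorFunction

theorem card_filter_dvd_Icc_le (a b d : ℕ) : #{m ∈ Icc a b | d ∣ m} ≤ (b - a) / d + 1 := by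
  rw [← card_range ((b - a) / d + 1)]
  refine card_le_card_of_injOn (fun m => (m - a) / d) ?_ ?_
  · intro m hm
    simp only [coe_filter, mem_Icc, Set.mem_ofPred_eq] at hm
    simp only [coe_range, Set.mem_Iio, Order.lt_add_one_iff]
    gcongr
    exact hm.1.2
  · intro m hm n hn (hmn : (m - a) / d = (n - a) / d)
    simp only [coe_filter, mem_Icc, Set.mem_ofPred_eq] at hm hn
    have hmod : m - a ≡ n - a [MOD d] := by
      refine Nat.ModEq.add_right_cancel' a ?_
      rw [Nat.sub_add_cancel hm.1.1, Nat.sub_add_cancel hn.1.1]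
      exact (Nat.modEq_zero_iff_dvd.2 hm.2).trans (Nat.modEq_zero_iff_dvd.2 hn.2).symm
    have hsub : m - a = n - a := by
      rw [← Nat.div_add_mod (m - a) d, ← Nat.div_add_mod (n - a) d, hmn, hmod]
    lia

theorem sum_Icc_sum_dvd_le {h : ℕ → ℝ} (hh : ∀ d, 0 ≤ h d) (a b N : ℕ) :
    ∑ m ∈ Icc a b, ∑ d ∈ Ioc 0 N with d ∣ m, h d ≤
      ((b - a : ℕ) + N) * ∑ d ∈ Ioc 0 N, h d / d := by
  simp only [sum_filter]
  rw [sum_comm, mul_sum]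
  refine sum_le_sum fun d hd => ?_
  obtain ⟨hd0, hdN⟩ := mem_Ioc.1 hd
  have hcard : (#{m ∈ Icc a b | d ∣ m} : ℝ) ≤ ((b - a : ℕ) + N) / d := by
    calc (#{m ∈ Icc a b | d ∣ m} : ℝ) ≤ ((b - a) / d : ℕ) + 1 := by
          exact_mod_cast card_filter_dvd_Icc_le a b d
      _ ≤ (b - a : ℕ) / d + N / d := by
          gcongr
          · exact Nat.cast_div_le
          · rw [one_le_div₀ (by positivity)]
            exact_mod_cast hdN
      _ = ((b - a : ℕ) + N) / d := (add_div _ _ _).symm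
  calc ∑ m ∈ Icc a b, (if d ∣ m then h d else 0) = #{m ∈ Icc a b | d ∣ m} * h d := by
        rw [← sum_filter, sum_const, nsmul_eq_mul]
    _ ≤ ((b - a : ℕ) + N) / d * h d := mul_le_mul_of_nonneg_right hcard (hh d)
    _ = ((b - a : ℕ) + N) * (h d / d) := by ring

theorem sum_Icc_tauk_le {k a b : ℕ} (hk : 1 ≤ k) (ha : 0 < a) {σ : ℝ} (hσ0 : 0 < σ)
    (hσ1 : σ ≤ 1) :
    ∑ m ∈ Icc a b, (tauk k m : ℝ) ≤
      ((b - a : ℕ) + ⌊(b : ℝ) ^ σ⌋₊) *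
        ((1 + Real.log ⌊(b : ℝ) ^ σ⌋₊) ^ ⌈(k : ℝ) ^ (1 / σ)⌉₊ *
          (Nat.log 2 b + 1 : ℝ) ^ (k / σ)) := by
  set N := ⌊(b : ℝ) ^ σ⌋₊
  set K := ⌈(k : ℝ) ^ (1 / σ)⌉₊
  set E := (Nat.log 2 b + 1 : ℝ) ^ (k / σ)
  have hpointwise : ∀ m ∈ Icc a b,
      (tauk k m : ℝ) ≤ ∑ d ∈ Ioc 0 N with d ∣ m, tauk K d * E := by
    intro m hm
    obtain ⟨ham, hmb⟩ := mem_Icc.1 hm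
    have hm0 : 0 < m := ha.trans_le ham
    obtain ⟨d, hdm, hd, hle⟩ :=
      exists_dvd_le_rpow_and_tauk_le hk hm0.ne' hσ0 hσ1 (Nat.le_ceil ((k : ℝ) ^ (1 / σ)))
    have hdN : d ≤ N := Nat.le_floor (hd.trans (by gcongr))
    calc (tauk k m : ℝ) ≤ tauk K d * (Nat.log 2 m + 1 : ℝ) ^ (k / σ) := hle
      _ ≤ tauk K d * E := by simp only [E]; gcongr
      _ ≤ ∑ d ∈ Ioc 0 N with d ∣ m, tauk K d * E :=
        single_le_sum (f := fun d => tauk K d * E) (fun _ _ => by positivity)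
          (mem_filter.2 ⟨mem_Ioc.2 ⟨Nat.pos_of_dvd_of_pos hdm hm0, hdN⟩, hdm⟩)
  calc ∑ m ∈ Icc a b, (tauk k m : ℝ)
      ≤ ∑ m ∈ Icc a b, ∑ d ∈ Ioc 0 N with d ∣ m, tauk K d * E := sum_le_sum hpointwise
    _ ≤ ((b - a : ℕ) + N) * ∑ d ∈ Ioc 0 N, tauk K d * E / d :=
      sum_Icc_sum_dvd_le (fun _ => by positivity) a b N
    _ = ((b - a : ℕ) + N) * ((∑ d ∈ Ioc 0 N, (tauk K d : ℝ) / d) * E) := by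
      simp only [sum_mul, mul_div_right_comm]
    _ ≤ ((b - a : ℕ) + N) * ((1 + Real.log N) ^ K * E) := by
      gcongr
      exact sum_tauk_div_le K N

theorem logb_two_add_one_le_log_sq {M : ℝ} (hM : Real.exp 3 ≤ M) {n : ℕ} (hn : (n : ℝ) ≤ 2 * M) :
    Real.logb 2 n + 1 ≤ Real.log M ^ 2 := by
  have hM0 : 0 < M := (Real.exp_pos 3).trans_le hM
  have hL : 3 ≤ Real.log M := (Real.le_log_iff_exp_le hM0).2 hM
  rcases n.eq_zero_or_pos with rfl | hn0
  · simp only [Nat.cast_zero, Real.logb_zero]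
    nlinarith
  have hlogn : Real.log n ≤ Real.log 2 + Real.log M := by
    rw [← Real.log_mul two_ne_zero hM0.ne']
    exact Real.log_le_log (by positivity) hn
  have hlog2 := Real.log_two_gt_d9
  have hlogb : Real.logb 2 n ≤ 1 + 2 * Real.log M := by
    rw [Real.logb, div_le_iff₀ (by linarith)]
    nlinarith
  nlinarith

theorem log_le_logb_two (n : ℕ) : Real.log n ≤ Real.logb 2 n :=
  le_div_self (Real.log_natCast_nonneg n) (Real.log_pos one_lt_two)
    (by linarith [Real.log_two_lt_d9])

theorem floor_add_sub_ceil_le {M H : ℝ} (hM : 0 ≤ M) (hH : 0 ≤ H) :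
    ((⌊M + H⌋₊ - ⌈M⌉₊ : ℕ) : ℝ) ≤ H := by
  rcases le_total ⌈M⌉₊ ⌊M + H⌋₊ with h | h
  · rw [Nat.cast_sub h]
    linarith [Nat.floor_le (add_nonneg hM hH), Nat.le_ceil M]
  · simpa [Nat.sub_eq_zero_of_le h] using hH

theorem floor_rpow_floor_add_le {M H σ : ℝ} (hM : 0 ≤ M) (hσ0 : 0 ≤ σ) (hσ1 : σ ≤ 1)
    (hMH : M ^ σ ≤ H) (hHM : H ≤ M) : (⌊(⌊M + H⌋₊ : ℝ) ^ σ⌋₊ : ℝ) ≤ 2 * H := by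
  have hH : 0 ≤ H := (Real.rpow_nonneg hM σ).trans hMH
  calc (⌊(⌊M + H⌋₊ : ℝ) ^ σ⌋₊ : ℝ) ≤ (⌊M + H⌋₊ : ℝ) ^ σ := Nat.floor_le (by positivity)
    _ ≤ (2 * M) ^ σ := by
      gcongr
      linarith [Nat.floor_le (add_nonneg hM hH)]
    _ = 2 ^ σ * M ^ σ := Real.mul_rpow two_pos.le hM
    _ ≤ 2 * H := by
      gcongr
      exact Real.rpow_le_self_of_one_le one_le_two hσ1

theorem ceil_add_div_le {k : ℕ} (hk : 1 ≤ k) {σ : ℝ} (hσ0 : 0 < σ) (hσ1 : σ ≤ 1) :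
    ⌈(k : ℝ) ^ (1 / σ)⌉₊ + k / σ ≤ (1 / σ + 2) * (k : ℝ) ^ (1 / σ) := by
  have hk1 : (1 : ℝ) ≤ k := by exact_mod_cast hk
  have hkσ : (k : ℝ) ≤ (k : ℝ) ^ (1 / σ) :=
    Real.self_le_rpow_of_one_le hk1 (one_le_one_div hσ0 hσ1)
  calc ⌈(k : ℝ) ^ (1 / σ)⌉₊ + k / σ ≤ 2 * (k : ℝ) ^ (1 / σ) + (k : ℝ) ^ (1 / σ) / σ := by
        gcongr
        exact Nat.ceil_le_two_mul (by linarith)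
    _ = (1 / σ + 2) * (k : ℝ) ^ (1 / σ) := by ring

theorem sum_tauk_regular_short_interval_general {σ : ℝ} (hσ0 : 0 < σ) (hσ1 : σ ≤ 1) {M H : ℝ}
    (hM : Real.exp 3 ≤ M) (hMH : M ^ σ ≤ H) (hHM : H ≤ M) {k : ℕ} (hk : 1 ≤ k) :
    ∑ m ∈ Icc ⌈M⌉₊ ⌊M + H⌋₊, (tauk k m : ℝ) ≤
      3 * H * Real.exp ((2 / σ + 4) * (k : ℝ) ^ (1 / σ) * Real.log (Real.log M)) := by
  have hM0 : 0 < M := (Real.exp_pos 3).trans_le hM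
  have hL : 3 ≤ Real.log M := (Real.le_log_iff_exp_le hM0).2 hM
  have hH0 : 0 < H := (Real.rpow_pos_of_pos hM0 σ).trans_le hMH
  have hN := floor_rpow_floor_add_le hM0.le hσ0.le hσ1 hMH hHM
  have hexponent := ceil_add_div_le hk hσ0 hσ1
  set b := ⌊M + H⌋₊
  set N := ⌊(b : ℝ) ^ σ⌋₊
  set K := ⌈(k : ℝ) ^ (1 / σ)⌉₊
  have hb : (b : ℝ) ≤ 2 * M := (Nat.floor_le (by positivity)).trans (by linarith)
  have hlogN : 1 + Real.log N ≤ Real.log M ^ 2 := by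
    linarith [log_le_logb_two N, logb_two_add_one_le_log_sq hM (hN.trans (by linarith))]
  have hlogb : (Nat.log 2 b + 1 : ℝ) ≤ Real.log M ^ 2 := by
    have hNatLog : (Nat.log 2 b : ℝ) ≤ Real.logb 2 b := by exact_mod_cast Real.natLog_le_logb b 2
    linarith [logb_two_add_one_le_log_sq hM hb]
  calc ∑ m ∈ Icc ⌈M⌉₊ b, (tauk k m : ℝ)
      ≤ ((b - ⌈M⌉₊ : ℕ) + N) * ((1 + Real.log N) ^ K * (Nat.log 2 b + 1 : ℝ) ^ (k / σ)) :=
        sum_Icc_tauk_le hk (Nat.ceil_pos.2 hM0) hσ0 hσ1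
    _ ≤ (H + 2 * H) * ((Real.log M ^ 2) ^ K * (Real.log M ^ 2) ^ (k / σ)) := by
        gcongr
        exact floor_add_sub_ceil_le hM0.le hH0.le
    _ = 3 * H * (Real.log M ^ 2) ^ (K + k / σ) := by
        rw [Real.rpow_add (by positivity), Real.rpow_natCast]
        ring
    _ ≤ 3 * H * (Real.log M ^ 2) ^ ((1 / σ + 2) * (k : ℝ) ^ (1 / σ)) := by
        gcongr
        nlinarith
    _ = 3 * H * Real.exp ((2 / σ + 4) * (k : ℝ) ^ (1 / σ) * Real.log (Real.log M)) := by
        rw [Real.rpow_def_of_pos (by positivity), Real.log_pow]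
        push_cast
        ring_nf

theorem mul_rpow_one_div_le_mul_rpow_one_div_sq {x σ : ℝ} (hx : 1 ≤ x) (hσ : 1 / 8 ≤ σ)
    (hσ1 : σ ≤ 1) : (2 / σ + 4) * x ^ (1 / σ) ≤ 20 * x ^ (1 / σ ^ 2) := by
  have hσ0 : 0 < σ := by linarith
  have hcoeff : 2 / σ + 4 ≤ 20 := by linarith [(div_le_iff₀ hσ0).2 (by linarith : 2 ≤ 16 * σ)]
  gcongr
  exact pow_le_of_le_one hσ0.le hσ1 two_ne_zero

theorem sum_tauk_regular_short_interval (α σ : ℝ) (hα0 : 0 < α) (hα1 : α < 1)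
    (hσ0 : 9 / 10 ≤ σ) (hσ1 : σ ≤ 1) :
    ∃ Mα Kα : ℝ, 1 ≤ Mα ∧ 0 < Kα ∧
      ∀ M : ℝ, Mα ≤ M → ∀ k : ℕ, 1 ≤ k → (k : ℝ) ≤ Real.log M →
      ∀ H : ℝ, M ^ σ ≤ H → H ≤ M →
        ∑ m ∈ (Finset.Icc ⌈M⌉₊ ⌊M + H⌋₊).filter
            (fun m => (bigOmega m : ℝ) ≤ Real.log M ^ α), (tauk k m : ℝ) ≤
          Kα * H * Real.exp (20 * (k : ℝ) ^ (1 / σ ^ 2) * Real.log (Real.log M)) := by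
  have hσpos : 0 < σ := (by norm_num : (0 : ℝ) < 9 / 10).trans_le hσ0
  have hσ8 : 1 / 8 ≤ σ := (by norm_num : (1 / 8 : ℝ) ≤ 9 / 10).trans hσ0
  refine ⟨Real.exp 3, 3, Real.one_le_exp zero_le_three, three_pos, fun M hM k hk _ H hMH hHM => ?_⟩
  have hM0 : 0 < M := (Real.exp_pos 3).trans_le hM
  have hH : 0 ≤ H := (Real.rpow_nonneg hM0.le σ).trans hMH
  have hL : 1 ≤ Real.log M :=
    (by norm_num : (1 : ℝ) ≤ 3).trans ((Real.le_log_iff_exp_le hM0).2 hM)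
  calc _ ≤ ∑ m ∈ Icc ⌈M⌉₊ ⌊M + H⌋₊, (tauk k m : ℝ) :=
        sum_le_sum_of_subset_of_nonneg (filter_subset _ _) fun _ _ _ => Nat.cast_nonneg _
    _ ≤ 3 * H * Real.exp ((2 / σ + 4) * (k : ℝ) ^ (1 / σ) * Real.log (Real.log M)) :=
        sum_tauk_regular_short_interval_general hσpos hσ1 hM hMH hHM hk
    _ ≤ 3 * H * Real.exp (20 * (k : ℝ) ^ (1 / σ ^ 2) * Real.log (Real.log M)) := by
        gcongr ?_ * Real.exp (?_ * _)
        · exact Real.log_nonneg hL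
        · exact mul_rpow_one_div_le_mul_rpow_one_div_sq (Nat.one_le_cast.2 hk) hσ8 hσ1
end
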